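/- arXiv:1109.1439 — 5 statements merged into one kernel-verified Lean document; each statement's English description precedes it below -/
import Mathlib

section
/- Let f : ℝⁿ → ℝⁿ be a C¹ function and X = ∏_{i=1}^{n}[aᵢ,bᵢ] with aᵢ < bᵢ for every i. Let 𝒜 be the set of all n×n real matrices A such that for all i, j the entry A_{ij} lies in the interval [inf_{x∈X} ∂fᵢ/∂x_j(x), sup_{x∈X} ∂fᵢ/∂x_j(x)]. Assume that every matrix A ∈ 𝒜 is invertible and that there exists x₀ ∈ X such that for every A ∈ 𝒜 the point x₀ − A⁻¹ f(x₀) lies in X. Then there exists a unique point x* ∈ X such that f(x*) = 0. -/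
/-! The proof is a continuation argument in place of Brouwer's fixed point theorem.

By the mean value theorem applied to each component, any two points `x, y ∈ X` satisfy
`f x - f y = A (x - y)` for some `A ∈ 𝒜` (`exists_mean_value_matrix`). Since `A` is invertible, `f`
is injective on `X`, which gives uniqueness.

For existence, let `m` be the centre of `X`, put `p t = (1 - t) m + t x₀` and consider the curve
`γ t = f (p t) - t f(x₀)`, which joins `f m` to `0`. If `x ∈ X` and `f x = γ t`, then
`A (x - p t) = -t f(x₀)` for some `A ∈ 𝒜`, that is, `x = (1 - t) m + t (x₀ - A⁻¹ f(x₀))`. For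
`t < 1` this is a convex combination of the interior point `m`, with positive weight, and a point
of `X`, so `x` lies in the interior of `X`. The derivative of `f` at `x` is itself in `𝒜`, hence
invertible, and so `f '' X` is a neighbourhood of `γ t`. The set of `t ∈ [0, 1]` with
`γ t ∈ f '' X` is therefore closed, contains `0` and is open to the right at each `t < 1`; hence
it contains `1`. -/

/-- The set of matrices enclosed entrywise by the range of the Jacobian of `f` over `X`, the
interval enclosure `[Df(X)]`. -/
def jacobianEnclosure {n : ℕ} (f : (Fin n → ℝ) → (Fin n → ℝ)) (X : Set (Fin n → ℝ)) :
    Set (Matrix (Fin n) (Fin n) ℝ) :=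
  {A | ∀ i j, A i j ∈ Set.Icc
        (sInf ((fun x => fderiv ℝ f x (Pi.single j 1) i) '' X))
        (sSup ((fun x => fderiv ℝ f x (Pi.single j 1) i) '' X))}

/-- The rows of the Jacobian may be evaluated at different points of `X`: the entrywise enclosure
does not tie them together. -/
lemma mem_jacobianEnclosure {n : ℕ} {f : (Fin n → ℝ) → (Fin n → ℝ)} (hf : ContDiff ℝ 1 f)
    {X : Set (Fin n → ℝ)} (hX : IsCompact X) (c : Fin n → Fin n → ℝ) (hc : ∀ i, c i ∈ X) :
    Matrix.of (fun i j => fderiv ℝ f (c i) (Pi.single j 1) i) ∈ jacobianEnclosure f X := by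
  intro i j
  have hcont : Continuous fun x => fderiv ℝ f x (Pi.single j 1) i := by
    have := hf.continuous_fderiv one_ne_zero
    fun_prop
  have hK := hX.image hcont
  exact ⟨csInf_le hK.bddBelow ⟨c i, hc i, rfl⟩, le_csSup hK.bddAbove ⟨c i, hc i, rfl⟩⟩

lemma clm_apply_eq_sum {n : ℕ} (L : (Fin n → ℝ) →L[ℝ] (Fin n → ℝ)) (v : Fin n → ℝ) (i : Fin n) :
    L v i = ∑ j, L (Pi.single j 1) i * v j := by
  conv_lhs => rw [pi_eq_sum_univ' v]
  simp [map_sum, Finset.sum_apply, mul_comm]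

lemma exists_mean_value_matrix {n : ℕ} {f : (Fin n → ℝ) → (Fin n → ℝ)} (hf : ContDiff ℝ 1 f)
    {X : Set (Fin n → ℝ)} (hX : IsCompact X) (hconv : Convex ℝ X)
    {x y : Fin n → ℝ} (hx : x ∈ X) (hy : y ∈ X) :
    ∃ A ∈ jacobianEnclosure f X, f x - f y = A.mulVec (x - y) := by
  have key : ∀ i, ∃ c ∈ X, f x i - f y i = fderiv ℝ f c (x - y) i := by
    intro i
    obtain ⟨c, hc, h⟩ := domain_mvt (f := fun z => f z i) (s := X) (x := y) (y := x)
      (f' := fun z => (ContinuousLinearMap.proj i).comp (fderiv ℝ f z))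
      (fun z _ => ((hasFDerivAt_pi'.1
        (hf.differentiable one_ne_zero z).hasFDerivAt) i).hasFDerivWithinAt) hconv hy hx
    exact ⟨c, hconv.segment_subset hy hx hc, h⟩
  choose c hc h using key
  refine ⟨_, mem_jacobianEnclosure hf hX c hc, funext fun i => ?_⟩
  rw [Pi.sub_apply, h i, clm_apply_eq_sum]
  rfl

/-- The Jacobian at a point of `X` lies in the enclosure, hence is invertible, so `f` is open at
that point by the inverse function theorem. -/
lemma image_mem_nhds_of_mem_interior {n : ℕ} {f : (Fin n → ℝ) → (Fin n → ℝ)}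
    (hf : ContDiff ℝ 1 f) {X : Set (Fin n → ℝ)} (hX : IsCompact X)
    (hinv : ∀ A ∈ jacobianEnclosure f X, IsUnit A) {x : Fin n → ℝ} (hx : x ∈ interior X) :
    f '' X ∈ nhds (f x) := by
  have hU := hinv _ (mem_jacobianEnclosure hf hX (fun _ => x) (fun _ => interior_subset hx))
  have hsurj : Function.Surjective (fderiv ℝ f x) := by
    intro w
    obtain ⟨v, hv⟩ := Matrix.mulVec_surjective_iff_isUnit.2 hU w
    refine ⟨v, ?_⟩
    rw [← hv]
    ext i
    rw [clm_apply_eq_sum]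
    rfl
  have hs : HasStrictFDerivAt f (fderiv ℝ f x) x :=
    hf.contDiffAt.hasStrictFDerivAt one_ne_zero
  rw [← hs.map_nhds_eq_of_surj (LinearMap.range_eq_top.2 hsurj)]
  exact Filter.image_mem_map (mem_interior_iff_mem_nhds.1 hx)


/-- **Interval Newton method.**
Let `f : ℝⁿ → ℝⁿ` be `C¹` and `X = ∏ᵢ [aᵢ, bᵢ]` with `aᵢ < bᵢ`.  Let `𝒜` be the set of
matrices whose `(i,j)` entry lies between the infimum and the supremum of `∂fᵢ/∂xⱼ` over `X`
(the interval enclosure `[Df(X)]`).  If every `A ∈ 𝒜` is invertible and there is `x₀ ∈ X`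
with `x₀ - A⁻¹ f(x₀) ∈ X` for every `A ∈ 𝒜`, then `f` has a unique zero in `X`. -/
theorem interval_newton_method
    (n : ℕ) (f : (Fin n → ℝ) → (Fin n → ℝ)) (hf : ContDiff ℝ 1 f)
    (a b : Fin n → ℝ) (hab : ∀ i, a i < b i)
    (X : Set (Fin n → ℝ)) (hX : X = Set.univ.pi fun i => Set.Icc (a i) (b i))
    (𝒜 : Set (Matrix (Fin n) (Fin n) ℝ))
    (h𝒜 : 𝒜 = {A | ∀ i j, A i j ∈ Set.Icc
        (sInf ((fun x => fderiv ℝ f x (Pi.single j 1) i) '' X))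
        (sSup ((fun x => fderiv ℝ f x (Pi.single j 1) i) '' X))})
    (hinv : ∀ A ∈ 𝒜, IsUnit A)
    (x₀ : Fin n → ℝ) (hx₀ : x₀ ∈ X)
    (hN : ∀ A ∈ 𝒜, x₀ - A⁻¹.mulVec (f x₀) ∈ X) :
    ∃! x, x ∈ X ∧ f x = 0 := by
  change 𝒜 = jacobianEnclosure f X at h𝒜
  subst h𝒜
  have hcpt : IsCompact X := hX ▸ isCompact_univ_pi fun i => isCompact_Icc
  have hconv : Convex ℝ X := hX ▸ convex_pi fun i _ => convex_Icc _ _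
  have hf0 := hf.continuous
  obtain ⟨m, hm⟩ : ∃ m, m ∈ interior X := by
    refine ⟨fun i => (a i + b i) / 2, ?_⟩
    rw [hX, interior_pi_set Set.finite_univ]
    intro i _
    have := hab i
    change (a i + b i) / 2 ∈ interior (Set.Icc (a i) (b i))
    rw [interior_Icc]
    constructor <;> linarith
  have hmX : m ∈ X := interior_subset hm
  obtain ⟨x, hx, hfx⟩ : ∃ x ∈ X, f x = 0 := by
    set γ : ℝ → Fin n → ℝ := fun t => f ((1 - t) • m + t • x₀) - t • f x₀ with hγ
    have hγc : Continuous γ := by fun_prop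
    have hsub : Set.Icc (0 : ℝ) 1 ⊆ γ ⁻¹' (f '' X) := by
      apply IsClosed.Icc_subset_of_forall_mem_nhdsWithin
      · exact ((hcpt.image hf0).isClosed.preimage hγc).inter isClosed_Icc
      · exact ⟨m, hmX, by simp [hγ]⟩
      · rintro t ⟨⟨x, hx, hxt⟩, ht0, ht1⟩
        have hp : (1 - t) • m + t • x₀ ∈ X :=
          hconv hmX hx₀ (by linarith) ht0 (by ring)
        obtain ⟨A, hA, hmv⟩ := exists_mean_value_matrix hf hcpt hconv hx hp
        have hdet : IsUnit A.det := (Matrix.isUnit_iff_isUnit_det A).1 (hinv A hA)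
        have hxeq : x = (1 - t) • m + t • (x₀ - A⁻¹.mulVec (f x₀)) := by
          have h1 : A.mulVec (x - ((1 - t) • m + t • x₀)) = -(t • f x₀) := by
            rw [← hmv, hxt, hγ]
            simp
          have h2 := congrArg A⁻¹.mulVec h1
          rw [Matrix.mulVec_mulVec, Matrix.nonsing_inv_mul A hdet, Matrix.one_mulVec,
            Matrix.mulVec_neg, Matrix.mulVec_smul] at h2
          rw [sub_eq_iff_eq_add.1 h2, smul_sub]
          abel
        have hxi : x ∈ interior X := by
          rw [hxeq]
          exact hconv.combo_interior_self_mem_interior hm (hN A hA) (by linarith) ht0 (by ring)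
        have hnh := image_mem_nhds_of_mem_interior hf hcpt hinv hxi
        rw [hxt] at hnh
        exact mem_nhdsWithin_of_mem_nhds (hγc.continuousAt hnh)
    obtain ⟨x, hx, h⟩ := hsub (Set.right_mem_Icc.2 zero_le_one)
    exact ⟨x, hx, by simpa [hγ] using h⟩
  refine ⟨x, ⟨hx, hfx⟩, ?_⟩
  rintro y ⟨hy, hfy⟩
  obtain ⟨A, hA, hmv⟩ := exists_mean_value_matrix hf hcpt hconv hy hx
  rw [hfx, hfy, sub_zero, ← Matrix.mulVec_zero A] at hmv
  exact sub_eq_zero.1 (Matrix.mulVec_injective_iff_isUnit.2 (hinv A hA) hmv.symm)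
end

section
/- Let f : ℝ² → ℝ be C¹ in the variables (x,p). Let x⁰, p⁰ ∈ ℝ, r > 0 and 0 < δ₀ < δ₁, and set I = [x⁰−r, x⁰+r], J₀ = [p⁰−δ₀, p⁰+δ₀], J₁ = [p⁰−δ₁, p⁰+δ₁]. Let a ∈ ℝ and define U = {(x, a(x−x⁰)+ι) : x ∈ I, ι ∈ J₁} ⊂ ℝ². Assume: (i) 0 does not lie in the closed interval hull D₀ of {∂f/∂p(x⁰,p) : p ∈ J₀}, and for every d ∈ D₀ the point p⁰ − f(x⁰,p⁰)/d lies in J₀; (ii) ∂f/∂p(z) ≠ 0 for every z ∈ U, and every α in the closed interval hull of {−(∂f/∂x(z))/(∂f/∂p(z)) : z ∈ U} satisfies |α − a| < (δ₁ − δ₀)/r. Then there exists a C¹ function κ : I → ℝ such that for every x ∈ I one has f(x, κ(x)) = 0, the point (x, κ(x)) lies in U, and κ'(x) lies in the closed interval hull of {−(∂f/∂x(z))/(∂f/∂p(z)) : z ∈ U}. -/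
/-!
Shear the parallelogram `U` by the slope `a` and put `c = (δ1 - δ0) / r`. On `U` every slope
`α = -f_x / f_p` satisfies `|α - a| < c`, so along a segment that starts at `(x0, p0 ± δ0)` and runs
with slope `a` relative to the centre line plus an outward opening `c |x - x0|`, the mean value
theorem writes the increment of `f` as `f_p` times a number of known sign. The interval Newton
condition, again with the mean value theorem, gives the signs of `f` at `(x0, p0 ± δ0)`. Hence `f`
changes sign on each vertical fibre of `U`, and the intermediate value theorem gives a zero `κ x`
there (`exists_zero_on_fibre`).

Regularity needs no implicit function theorem: since `U` is convex, the mean value theorem on the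
chord between two zeros shows that its slope equals `-f_x / f_p` at some point of the chord
(`exists_secant_slope`). Slopes are bounded on `U`, so `κ` is Lipschitz, and letting one
zero tend to the other identifies the derivative.
-/

/-- The parallelogram of points `(x, a * (x - x0) + ι)` with `|x - x0| ≤ r` and `|ι - p0| ≤ δ`. -/
def slantedBox (x0 p0 r δ a : ℝ) : Set (ℝ × ℝ) :=
  {z | |z.1 - x0| ≤ r ∧ |z.2 - a * (z.1 - x0) - p0| ≤ δ}

/-- The slope `-f_x / f_p` of the level curve of `f` through `z`. -/
noncomputable def levelSlope (f : ℝ × ℝ → ℝ) (z : ℝ × ℝ) : ℝ :=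
  -(fderiv ℝ f z ((1 : ℝ), (0 : ℝ))) / fderiv ℝ f z ((0 : ℝ), (1 : ℝ))

lemma convex_slantedBox (x0 p0 r δ a : ℝ) : Convex ℝ (slantedBox x0 p0 r δ a) := by
  rintro ⟨x, p⟩ ⟨h1, h2⟩ ⟨y, q⟩ ⟨h3, h4⟩ s t hs ht hst
  simp only [abs_le] at h1 h2 h3 h4
  obtain rfl : t = 1 - s := by linarith
  simp only [slantedBox, Set.mem_ofPred_eq, Prod.smul_mk, Prod.mk_add_mk, smul_eq_mul, abs_le]
  refine ⟨⟨?_, ?_⟩, ?_, ?_⟩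
  · nlinarith [mul_le_mul_of_nonneg_left h1.1 hs, mul_le_mul_of_nonneg_left h3.1 ht]
  · nlinarith [mul_le_mul_of_nonneg_left h1.2 hs, mul_le_mul_of_nonneg_left h3.2 ht]
  · nlinarith [mul_le_mul_of_nonneg_left h2.1 hs, mul_le_mul_of_nonneg_left h4.1 ht]
  · nlinarith [mul_le_mul_of_nonneg_left h2.2 hs, mul_le_mul_of_nonneg_left h4.2 ht]

lemma slantedBox_eq (x0 p0 r δ a : ℝ) :
    slantedBox x0 p0 r δ a = {z | ∃ x ∈ Set.Icc (x0 - r) (x0 + r),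
      ∃ ι ∈ Set.Icc (p0 - δ) (p0 + δ), z = (x, a * (x - x0) + ι)} := by
  ext ⟨x, p⟩
  simp only [slantedBox, Set.mem_ofPred_eq, abs_le, Set.mem_Icc]
  constructor
  · rintro ⟨h1, h2⟩
    exact ⟨x, ⟨by linarith, by linarith⟩, p - a * (x - x0), ⟨by linarith, by linarith⟩,
      by simp⟩
  · rintro ⟨y, hy, ι, hι, h⟩
    obtain ⟨rfl, rfl⟩ := Prod.mk.inj h
    exact ⟨⟨by linarith, by linarith⟩, by linarith, by linarith⟩

lemma isCompact_slantedBox (x0 p0 r δ a : ℝ) : IsCompact (slantedBox x0 p0 r δ a) := by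
  have h : slantedBox x0 p0 r δ a = (fun q : ℝ × ℝ => (q.1, a * (q.1 - x0) + q.2)) ''
      (Set.Icc (x0 - r) (x0 + r) ×ˢ Set.Icc (p0 - δ) (p0 + δ)) := by
    rw [slantedBox_eq]
    ext z
    constructor
    · rintro ⟨x, hx, ι, hι, rfl⟩
      exact ⟨(x, ι), ⟨hx, hι⟩, rfl⟩
    · rintro ⟨⟨x, ι⟩, ⟨hx, hι⟩, rfl⟩
      exact ⟨x, hx, ι, hι, rfl⟩
  rw [h]
  exact (isCompact_Icc.prod isCompact_Icc).image (by fun_prop)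

lemma fderiv_apply_pair (f : ℝ × ℝ → ℝ) (z : ℝ × ℝ) (h k : ℝ) :
    fderiv ℝ f z (h, k) = h * fderiv ℝ f z ((1 : ℝ), (0 : ℝ))
      + k * fderiv ℝ f z ((0 : ℝ), (1 : ℝ)) := by
  have : ((h, k) : ℝ × ℝ) = h • ((1 : ℝ), (0 : ℝ)) + k • ((0 : ℝ), (1 : ℝ)) := by simp
  rw [this, map_add, map_smul, map_smul, smul_eq_mul, smul_eq_mul]

lemma exists_mean_value {f : ℝ × ℝ → ℝ} (hf : ContDiff ℝ 1 f) {U : Set (ℝ × ℝ)}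
    (hU : Convex ℝ U) (hfp : ∀ z ∈ U, fderiv ℝ f z ((0 : ℝ), (1 : ℝ)) ≠ 0)
    {z w : ℝ × ℝ} (hz : z ∈ U) (hw : w ∈ U) :
    ∃ ξ ∈ U, dist ξ z ≤ dist w z ∧ f w - f z = fderiv ℝ f ξ ((0 : ℝ), (1 : ℝ)) *
      ((w.2 - z.2) - levelSlope f ξ * (w.1 - z.1)) := by
  obtain ⟨ξ, hξ, h⟩ := domain_mvt (f := f) (f' := fderiv ℝ f) (s := U)
    (fun x _ => ((hf.differentiable one_ne_zero) x).hasFDerivAt.hasFDerivWithinAt) hU hz hw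
  have hξU := hU.segment_subset hz hw hξ
  refine ⟨ξ, hξU, ?_, ?_⟩
  · have := dist_add_dist_of_mem_segment hξ
    rw [dist_comm z ξ, dist_comm z w] at this
    linarith [dist_nonneg (x := ξ) (y := w)]
  · have h2 := fderiv_apply_pair f ξ (w.1 - z.1) (w.2 - z.2)
    have h3 : w - z = (w.1 - z.1, w.2 - z.2) := rfl
    have := hfp ξ hξU
    rw [h, h3, h2, levelSlope]
    field_simp
    ring

/-- The chord between two zeros of `f` in a convex set has the slope of a level curve at some
point of the set that is no farther from one zero than the other zero is. -/
lemma exists_secant_slope {f : ℝ × ℝ → ℝ} (hf : ContDiff ℝ 1 f) {U : Set (ℝ × ℝ)}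
    (hU : Convex ℝ U) (hfp : ∀ z ∈ U, fderiv ℝ f z ((0 : ℝ), (1 : ℝ)) ≠ 0)
    {z w : ℝ × ℝ} (hz : z ∈ U) (hw : w ∈ U) (hz0 : f z = 0) (hw0 : f w = 0) :
    ∃ ξ ∈ U, dist ξ z ≤ dist w z ∧ w.2 - z.2 = levelSlope f ξ * (w.1 - z.1) := by
  obtain ⟨ξ, hξ, hd, h⟩ := exists_mean_value hf hU hfp hz hw
  refine ⟨ξ, hξ, hd, ?_⟩
  rw [hz0, hw0, sub_zero, eq_comm, mul_eq_zero] at h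
  linarith [h.resolve_left (hfp ξ hξ)]

lemma continuousOn_levelSlope {f : ℝ × ℝ → ℝ} (hf : ContDiff ℝ 1 f) {U : Set (ℝ × ℝ)}
    (hfp : ∀ z ∈ U, fderiv ℝ f z ((0 : ℝ), (1 : ℝ)) ≠ 0) : ContinuousOn (levelSlope f) U := by
  have hc : Continuous (fderiv ℝ f) := hf.continuous_fderiv one_ne_zero
  exact ContinuousOn.div (by fun_prop) (by fun_prop) hfp

/-- If `f_p` has constant sign `σ` on the box, slopes stay within `c` of `a`, and the
Newton bound `|f (x0, p0)| ≤ |f_p| δ0` holds on the central fibre, then each fibre of the box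
contains a zero of `f`. -/
lemma exists_zero_on_fibre {f : ℝ × ℝ → ℝ} (hf : ContDiff ℝ 1 f)
    {x0 p0 r δ0 δ1 a c σ : ℝ} (hr : 0 < r) (hδ0 : 0 < δ0) (hc : 0 ≤ c) (hcr : c * r = δ1 - δ0)
    (hσ : ∀ z ∈ slantedBox x0 p0 r δ1 a, 0 < σ * fderiv ℝ f z ((0 : ℝ), (1 : ℝ)))
    (hslope : ∀ z ∈ slantedBox x0 p0 r δ1 a, |levelSlope f z - a| ≤ c)
    (hN : ∀ p ∈ Set.Icc (p0 - δ0) (p0 + δ0),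
      |f (x0, p0) / fderiv ℝ f (x0, p) ((0 : ℝ), (1 : ℝ))| ≤ δ0)
    {x : ℝ} (hx : |x - x0| ≤ r) :
    ∃ p, f (x, p) = 0 ∧ (x, p) ∈ slantedBox x0 p0 r δ1 a := by
  set U := slantedBox x0 p0 r δ1 a with hUdef
  have hfp : ∀ z ∈ U, fderiv ℝ f z ((0 : ℝ), (1 : ℝ)) ≠ 0 := fun z hz h => by
    have := hσ z hz
    simp [h] at this
  have hδ : δ0 ≤ δ1 := by nlinarith
  have hUc : Convex ℝ U := convex_slantedBox ..
  have hbox : ∀ p, |p - p0| ≤ δ0 → (x0, p) ∈ slantedBox x0 p0 r δ0 a := fun p hp =>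
    ⟨by simpa using hr.le, by simpa using hp⟩
  have hsub : slantedBox x0 p0 r δ0 a ⊆ U := fun z hz => ⟨hz.1, hz.2.trans hδ⟩
  have hcx : c * |x - x0| ≤ δ1 - δ0 := hcr ▸ mul_le_mul_of_nonneg_left hx hc
  have hcx0 : 0 ≤ c * |x - x0| := mul_nonneg hc (abs_nonneg _)
  have hctr : (x0, p0) ∈ slantedBox x0 p0 r δ0 a := hbox p0 (by simpa using hδ0.le)
  -- `e = 1` treats the upper edge of the opening cone, `e = -1` the lower edge.
  have key : ∀ e : ℝ, |e| = 1 →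
      0 ≤ e * (σ * f (x, a * (x - x0) + p0 + e * (δ0 + c * |x - x0|))) := by
    intro e he
    have hee : e * e = 1 := by rw [← abs_mul_abs_self, he, one_mul]
    have h0 : (x0, p0 + e * δ0) ∈ slantedBox x0 p0 r δ0 a :=
      hbox _ (by simp [abs_mul, he, abs_of_pos hδ0])
    have h1 : (x, a * (x - x0) + p0 + e * (δ0 + c * |x - x0|)) ∈ U := by
      refine ⟨hx, ?_⟩
      have : a * (x - x0) + p0 + e * (δ0 + c * |x - x0|) - a * (x - x0) - p0
          = e * (δ0 + c * |x - x0|) := by ring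
      simp only [this, abs_mul, he, one_mul]
      rw [abs_of_nonneg (by linarith)]
      linarith
    -- The central fibre is a degenerate box of width zero, so the mean value point stays on it.
    have hfib : ∀ p, |p - p0| ≤ δ0 → (x0, p) ∈ slantedBox x0 p0 0 δ0 a := fun p hp =>
      ⟨by simp, by simpa using hp⟩
    have hsub0 : slantedBox x0 p0 0 δ0 a ⊆ U := fun z hz => ⟨hz.1.trans hr.le, hz.2.trans hδ⟩
    obtain ⟨⟨y, q⟩, hξ, -, hm⟩ := exists_mean_value hf (convex_slantedBox x0 p0 0 δ0 a)
      (fun z hz => hfp z (hsub0 hz)) (hfib p0 (by simpa using hδ0.le))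
      (hfib (p0 + e * δ0) (by simp [abs_mul, he, abs_of_pos hδ0]))
    obtain rfl : y = x0 := by
      have := abs_nonpos_iff.1 hξ.1
      simpa [sub_eq_zero] using this
    have hq : |q - p0| ≤ δ0 := by simpa using hξ.2
    have hd := hσ _ (hsub0 hξ)
    have hn := hN q (by rw [abs_le] at hq; exact ⟨by linarith, by linarith⟩)
    set d := fderiv ℝ f (y, q) ((0 : ℝ), (1 : ℝ)) with hddef
    have hdne : d ≠ 0 := hfp _ (hsub0 hξ)
    have hF : f (y, p0) = d * (f (y, p0) / d) := by field_simp
    have hstart : 0 ≤ e * (σ * f (y, p0 + e * δ0)) := by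
      have : f (y, p0 + e * δ0) = d * (f (y, p0) / d + e * δ0) := by
        simp only [sub_self, mul_zero, sub_zero] at hm
        linarith
      rw [this]
      have h3 : e * (σ * (d * (f (y, p0) / d + e * δ0)))
          = (σ * d) * (e * (f (y, p0) / d) + (e * e) * δ0) := by ring
      rw [h3, hee]
      have h4 : |e * (f (y, p0) / d)| ≤ δ0 := by rw [abs_mul, he, one_mul]; exact hn
      exact mul_nonneg hd.le (by linarith [(abs_le.1 h4).1])
    obtain ⟨ξ, hξ', -, hm'⟩ := exists_mean_value hf hUc hfp (hsub h0) h1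
    have h5 : f (x, a * (x - y) + p0 + e * (δ0 + c * |x - y|)) = f (y, p0 + e * δ0)
        + fderiv ℝ f ξ ((0 : ℝ), (1 : ℝ)) *
          (e * (c * |x - y|) - (levelSlope f ξ - a) * (x - y)) := by
      simp only at hm'
      linear_combination hm'
    have h6 : |e * ((levelSlope f ξ - a) * (x - y))| ≤ c * |x - y| := by
      rw [abs_mul, he, one_mul, abs_mul]
      exact mul_le_mul_of_nonneg_right (hslope ξ hξ') (abs_nonneg _)
    have h7 : 0 ≤ (σ * fderiv ℝ f ξ ((0 : ℝ), (1 : ℝ))) *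
        ((e * e) * (c * |x - y|) - e * ((levelSlope f ξ - a) * (x - y))) := by
      rw [hee]
      exact mul_nonneg (hσ ξ hξ').le (by linarith [(abs_le.1 h6).2])
    rw [h5]
    linear_combination hstart + h7
  have hup := key 1 (by simp)
  have hlo := key (-1) (by simp)
  have hcont : ContinuousOn (fun p => σ * f (x, p))
      (Set.Icc (a * (x - x0) + p0 + -1 * (δ0 + c * |x - x0|))
        (a * (x - x0) + p0 + 1 * (δ0 + c * |x - x0|))) := by
    have := hf.continuous
    fun_prop
  obtain ⟨p, hp, hp0⟩ := intermediate_value_Icc (by linarith) hcont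
    (show (0 : ℝ) ∈ _ from ⟨by linarith, by linarith⟩)
  have hσ0 : σ ≠ 0 := fun h => by
    have := hσ _ (hsub hctr)
    simp [h] at this
  refine ⟨p, (mul_eq_zero.1 hp0).resolve_left hσ0, hx, ?_⟩
  rw [abs_le]
  exact ⟨by linarith [hp.1], by linarith [hp.2]⟩

/-- A selection of zeros of `f` from the fibres of a convex set on which slopes are bounded is
`C¹`, with derivative the slope of the level curve. -/
lemma hasDerivWithinAt_of_zeros {f : ℝ × ℝ → ℝ} (hf : ContDiff ℝ 1 f) {U : Set (ℝ × ℝ)}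
    (hU : Convex ℝ U) (hfp : ∀ z ∈ U, fderiv ℝ f z ((0 : ℝ), (1 : ℝ)) ≠ 0)
    {M : ℝ} (hM : ∀ z ∈ U, |levelSlope f z| ≤ M) {I : Set ℝ} {κ : ℝ → ℝ}
    (hκ : ∀ x ∈ I, f (x, κ x) = 0 ∧ (x, κ x) ∈ U) :
    ContinuousOn (fun x => levelSlope f (x, κ x)) I ∧
      ∀ x ∈ I, HasDerivWithinAt κ (levelSlope f (x, κ x)) I x := by
  have hsec : ∀ x ∈ I, ∀ y ∈ I, ∃ ξ ∈ U, dist ξ (x, κ x) ≤ dist (y, κ y) (x, κ x) ∧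
      κ y - κ x = levelSlope f ξ * (y - x) := fun x hx y hy =>
    exists_secant_slope hf hU hfp (hκ x hx).2 (hκ y hy).2 (hκ x hx).1 (hκ y hy).1
  have hcont : ContinuousOn κ I := by
    refine (LipschitzOnWith.of_dist_le_mul (K := M.toNNReal) ?_).continuousOn
    intro x hx y hy
    obtain ⟨ξ, hξ, -, h⟩ := hsec y hy x hx
    rw [Real.dist_eq, Real.dist_eq, h, abs_mul]
    exact mul_le_mul_of_nonneg_right ((hM ξ hξ).trans (Real.le_coe_toNNReal M)) (abs_nonneg _)
  have hgraph : ContinuousOn (fun x => (x, κ x)) I := continuousOn_id.prodMk hcont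
  have hs := continuousOn_levelSlope hf hfp
  refine ⟨hs.comp hgraph fun x hx => (hκ x hx).2, fun x hx => ?_⟩
  rw [hasDerivWithinAt_iff_tendsto_slope]
  choose! ξ hξU hξd hξs using hsec x hx
  have hle : nhdsWithin x (I \ {x}) ≤ nhdsWithin x I := nhdsWithin_mono _ Set.sdiff_subset
  have hmem : ∀ᶠ y in nhdsWithin x (I \ {x}), y ∈ I \ {x} := self_mem_nhdsWithin
  have hξ : Filter.Tendsto ξ (nhdsWithin x (I \ {x})) (nhdsWithin (x, κ x) U) := by
    refine tendsto_nhdsWithin_iff.2 ⟨?_, hmem.mono fun y hy => hξU y hy.1⟩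
    rw [tendsto_iff_dist_tendsto_zero]
    exact squeeze_zero' (Filter.Eventually.of_forall fun _ => dist_nonneg)
      (hmem.mono fun y hy => hξd y hy.1)
      (tendsto_iff_dist_tendsto_zero.1 ((hgraph x hx).tendsto.mono_left hle))
  refine ((hs (x, κ x) (hκ x hx).2).tendsto.comp hξ).congr' ?_
  filter_upwards [hmem] with y hy
  have hne : y - x ≠ 0 := sub_ne_zero.2 hy.2
  rw [slope_def_field, hξs y hy.1, Function.comp_apply]
  field_simp


/-- **Continuation of an implicitly defined zero curve via the interval Newton method.**
Let `f : ℝ² → ℝ` be `C¹` in `(x, p)`, `I = [x⁰-r, x⁰+r]`, `J₀ = [p⁰-δ₀, p⁰+δ₀]`,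
`J₁ = [p⁰-δ₁, p⁰+δ₁]` with `0 < δ₀ < δ₁`, and
`U = {(x, a(x-x⁰)+ι) : x ∈ I, ι ∈ J₁}`.  Assume
(i) `0` is not in the interval hull `D₀` of `{∂f/∂p(x⁰,p) : p ∈ J₀}`, and for every `d ∈ D₀`
the Newton point `p⁰ - f(x⁰,p⁰)/d` lies in `J₀`;
(ii) `∂f/∂p ≠ 0` on `U` and every `α` in the interval hull of
`{-(∂f/∂x)/(∂f/∂p) : z ∈ U}` satisfies `|α - a| < (δ₁-δ₀)/r`.
Then there is a `C¹` function `κ : I → ℝ` with `f(x, κ(x)) = 0`, `(x, κ(x)) ∈ U` and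
`κ'(x)` in the slope hull, for every `x ∈ I`. -/
theorem implicit_curve_continuation
    (f : ℝ × ℝ → ℝ) (hf : ContDiff ℝ 1 f)
    (x0 p0 r δ0 δ1 a : ℝ) (hr : 0 < r) (hδ0 : 0 < δ0) (hδ01 : δ0 < δ1)
    (I J0 J1 : Set ℝ)
    (hI : I = Set.Icc (x0 - r) (x0 + r))
    (hJ0 : J0 = Set.Icc (p0 - δ0) (p0 + δ0))
    (hJ1 : J1 = Set.Icc (p0 - δ1) (p0 + δ1))
    (U : Set (ℝ × ℝ))
    (hU : U = {z | ∃ x ∈ I, ∃ ι ∈ J1, z = (x, a * (x - x0) + ι)})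
    (D0 : Set ℝ)
    (hD0 : D0 = Set.Icc
      (sInf ((fun p => fderiv ℝ f (x0, p) ((0 : ℝ), (1 : ℝ))) '' J0))
      (sSup ((fun p => fderiv ℝ f (x0, p) ((0 : ℝ), (1 : ℝ))) '' J0)))
    (hD0zero : (0 : ℝ) ∉ D0)
    (hNewton : ∀ d ∈ D0, p0 - f (x0, p0) / d ∈ J0)
    (hfp : ∀ z ∈ U, fderiv ℝ f z ((0 : ℝ), (1 : ℝ)) ≠ 0)
    (Ahull : Set ℝ)
    (hAhull : Ahull = Set.Icc
      (sInf ((fun z => -(fderiv ℝ f z ((1 : ℝ), (0 : ℝ))) /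
        fderiv ℝ f z ((0 : ℝ), (1 : ℝ))) '' U))
      (sSup ((fun z => -(fderiv ℝ f z ((1 : ℝ), (0 : ℝ))) /
        fderiv ℝ f z ((0 : ℝ), (1 : ℝ))) '' U)))
    (hslope : ∀ α ∈ Ahull, |α - a| < (δ1 - δ0) / r) :
    ∃ κ dκ : ℝ → ℝ, ContinuousOn dκ I ∧ ∀ x ∈ I,
      HasDerivWithinAt κ (dκ x) I x ∧ f (x, κ x) = 0 ∧ (x, κ x) ∈ U ∧ dκ x ∈ Ahull := by
  subst hI hJ0 hJ1 hD0 hAhull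
  rw [← slantedBox_eq] at hU
  subst hU
  set U := slantedBox x0 p0 r δ1 a with hUdef
  have hUc : Convex ℝ U := convex_slantedBox ..
  have hfd : Continuous (fderiv ℝ f) := hf.continuous_fderiv one_ne_zero
  have hhull : ∀ z ∈ U, levelSlope f z ∈ Set.Icc (sInf (levelSlope f '' U))
      (sSup (levelSlope f '' U)) := fun z hz => by
    have hK := (isCompact_slantedBox x0 p0 r δ1 a).image_of_continuousOn
      (continuousOn_levelSlope hf hfp)
    exact ⟨csInf_le hK.bddBelow ⟨z, hz, rfl⟩, le_csSup hK.bddAbove ⟨z, hz, rfl⟩⟩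
  have hsl : ∀ z ∈ U, |levelSlope f z - a| ≤ (δ1 - δ0) / r := fun z hz =>
    (hslope _ (hhull z hz)).le
  have hN : ∀ p ∈ Set.Icc (p0 - δ0) (p0 + δ0),
      |f (x0, p0) / fderiv ℝ f (x0, p) ((0 : ℝ), (1 : ℝ))| ≤ δ0 := fun p hp => by
    have hK := (isCompact_Icc (a := p0 - δ0) (b := p0 + δ0)).image
      (f := fun p => fderiv ℝ f (x0, p) ((0 : ℝ), (1 : ℝ))) (by fun_prop)
    have := hNewton _ ⟨csInf_le hK.bddBelow ⟨p, hp, rfl⟩, le_csSup hK.bddAbove ⟨p, hp, rfl⟩⟩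
    rw [abs_le]
    exact ⟨by linarith [this.2], by linarith [this.1]⟩
  have hpos : 0 ≤ (δ1 - δ0) / r := div_nonneg (by linarith) hr.le
  -- `U` is connected, so the nonvanishing continuous function `f_p` has constant sign on it.
  obtain ⟨σ, hσ⟩ : ∃ σ : ℝ, ∀ z ∈ U, 0 < σ * fderiv ℝ f z ((0 : ℝ), (1 : ℝ)) := by
    by_cases h : ∀ z ∈ U, 0 < fderiv ℝ f z ((0 : ℝ), (1 : ℝ))
    · exact ⟨1, fun z hz => by simpa using h z hz⟩
    · push Not at h
      obtain ⟨z, hz, hz0⟩ := h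
      refine ⟨-1, fun w hw => ?_⟩
      by_contra hw0
      obtain ⟨v, hv, hv0⟩ := hUc.isPreconnected.intermediate_value hz hw
        (f := fun z => fderiv ℝ f z ((0 : ℝ), (1 : ℝ))) (by fun_prop)
        (show (0 : ℝ) ∈ _ from ⟨hz0, by linarith⟩)
      exact hfp v hv hv0
  have hzero : ∀ x ∈ Set.Icc (x0 - r) (x0 + r), ∃ p, f (x, p) = 0 ∧ (x, p) ∈ U := fun x hx =>
    exists_zero_on_fibre hf hr hδ0 hpos (div_mul_cancel₀ _ hr.ne') hσ hsl hN
      (abs_le.2 ⟨by linarith [hx.1], by linarith [hx.2]⟩)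
  choose! κ hκ using hzero
  have hM : ∀ z ∈ U, |levelSlope f z| ≤ (δ1 - δ0) / r + |a| := fun z hz => by
    linarith [hsl z hz, abs_sub_abs_le_abs_sub (levelSlope f z) a]
  obtain ⟨hc, hd⟩ := hasDerivWithinAt_of_zeros hf hUc hfp hM hκ
  exact ⟨κ, _, hc, fun x hx => ⟨hd x hx, (hκ x hx).1, (hκ x hx).2, hhull _ (hκ x hx).2⟩⟩
end

section
/- Let n ≥ 2, α > 0, m > 0, and let Q : ℝ × ℝ^{n−1} → ℝ be given by Q(𝗑,𝗒) = α𝗑² − ‖𝗒‖². Let A be an n×n real matrix with block form A = [[a₁₁, εᵀ],[B, C]] where a₁₁ ∈ ℝ, ε ∈ ℝ^{n−1}, B is (n−1)×1 and C is (n−1)×(n−1). Assume a₁₁ ≥ a̲ > 0, ‖ε‖ ≤ ϵ, and (a̲ − ϵ√α)/√(1+α) > m. Then for every nonzero v = (𝗑,𝗒) ∈ ℝ × ℝ^{n−1} with Q(v) ≥ 0 one has ‖Av‖ > m‖v‖. -/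
/-!
The first coordinate alone already expands. On the cone `Q(v) ≥ 0` the second component satisfies
`‖𝗒‖ ≤ √α |𝗑|`, so Cauchy–Schwarz gives `|ε ⬝ 𝗒| ≤ ϵ √α |𝗑|` and hence
`|(A v)₀| ≥ (a̲ - ϵ √α) |𝗑|`. The cone condition also gives `‖v‖ ≤ √(1+α) |𝗑|`, and `𝗑 ≠ 0` since
`v ≠ 0`. Therefore `m ‖v‖ ≤ m √(1+α) |𝗑| < (a̲ - ϵ √α) |𝗑| ≤ |(A v)₀| ≤ ‖A v‖`.
-/

/-- The Euclidean norm of a vector in `ℝᵏ`. -/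
noncomputable def euclNorm {k : ℕ} (v : Fin k → ℝ) : ℝ :=
  Real.sqrt (∑ i, (v i) ^ 2)

/-- The quadratic form `Q(𝗑, 𝗒) = α 𝗑² - ‖𝗒‖²` on `ℝⁿ = ℝ × ℝ^{n-1}` (here `n = d + 2`),
where `𝗑 = v 0` and `𝗒 = (v 1, …, v (n-1))`. -/
def Qform (d : ℕ) (α : ℝ) (v : Fin (d + 2) → ℝ) : ℝ :=
  α * (v 0) ^ 2 - ∑ j : Fin (d + 1), (v j.succ) ^ 2

/-- **Expansion from an interval matrix bound (verification of condition (cc2)).**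
Let `n = d + 2 ≥ 2`, `α > 0`, `m > 0`, and let `A` be an `n × n` matrix with block form
`[[a₁₁, εᵀ],[B, C]]` where `a₁₁ ≥ a̲ > 0` and `‖ε‖ ≤ ϵ`.  If
`(a̲ - ϵ√α)/√(1+α) > m`, then `‖Av‖ > m‖v‖` (Euclidean norms) for every nonzero
`v = (𝗑,𝗒)` with `Q(v) = α𝗑² - ‖𝗒‖² ≥ 0`. -/
theorem cone_expansion_of_matrix_bounds
    (d : ℕ) (α m abar ϵ : ℝ) (hα : 0 < α) (hm : 0 < m)
    (A : Matrix (Fin (d + 2)) (Fin (d + 2)) ℝ)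
    (habar : 0 < abar) (ha : abar ≤ A 0 0)
    (hε : Real.sqrt (∑ j : Fin (d + 1), (A 0 j.succ) ^ 2) ≤ ϵ)
    (hcond : m < (abar - ϵ * Real.sqrt α) / Real.sqrt (1 + α))
    (v : Fin (d + 2) → ℝ) (hv : v ≠ 0)
    (hQ : 0 ≤ Qform d α v) :
    m * euclNorm v < euclNorm (A.mulVec v) := by
  have hQ' : ∑ j : Fin (d + 1), (v j.succ) ^ 2 ≤ α * (v 0) ^ 2 := by
    unfold Qform at hQ
    linarith
  have hx : v 0 ≠ 0 := by
    intro h0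
    apply hv
    have hs : ∑ j : Fin (d + 1), (v j.succ) ^ 2 = 0 :=
      le_antisymm (by simpa [h0] using hQ') (Finset.sum_nonneg fun j _ => sq_nonneg _)
    rw [Finset.sum_eq_zero_iff_of_nonneg fun j _ => sq_nonneg _] at hs
    funext i
    refine Fin.cases h0 (fun j => ?_) i
    exact pow_eq_zero_iff two_ne_zero |>.mp (hs j (Finset.mem_univ j))
  have hxpos : 0 < |v 0| := abs_pos.mpr hx
  have hy : √(∑ j : Fin (d + 1), (v j.succ) ^ 2) ≤ √α * |v 0| := by
    rw [← Real.sqrt_sq_eq_abs, ← Real.sqrt_mul hα.le]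
    exact Real.sqrt_le_sqrt hQ'
  have hnorm : euclNorm v ≤ √(1 + α) * |v 0| := by
    unfold euclNorm
    rw [← Real.sqrt_sq_eq_abs, ← Real.sqrt_mul (by positivity), Fin.sum_univ_succ]
    exact Real.sqrt_le_sqrt (by linarith)
  have hdot : |∑ j : Fin (d + 1), A 0 j.succ * v j.succ| ≤ ϵ * (√α * |v 0|) := by
    refine le_trans ?_ (mul_le_mul hε hy (Real.sqrt_nonneg _) ((Real.sqrt_nonneg _).trans hε))
    rw [← Real.sqrt_mul (Finset.sum_nonneg fun j _ => sq_nonneg _)]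
    exact Real.abs_le_sqrt (Finset.sum_mul_sq_le_sq_mul_sq _ _ _)
  have hrow : A.mulVec v 0 = A 0 0 * v 0 + ∑ j : Fin (d + 1), A 0 j.succ * v j.succ := by
    simp only [Matrix.mulVec, dotProduct]
    exact Fin.sum_univ_succ _
  have hlow : (abar - ϵ * √α) * |v 0| ≤ |A.mulVec v 0| := by
    have h1 : |A 0 0 * v 0| - |∑ j : Fin (d + 1), A 0 j.succ * v j.succ| ≤ |A.mulVec v 0| := by
      rw [hrow]
      simpa using abs_sub_abs_le_abs_sub (A 0 0 * v 0) (-∑ j : Fin (d + 1), A 0 j.succ * v j.succ)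
    rw [abs_mul, abs_of_pos (habar.trans_le ha)] at h1
    have h2 := mul_le_mul_of_nonneg_right ha hxpos.le
    linarith
  have hcoord : |A.mulVec v 0| ≤ euclNorm (A.mulVec v) :=
    Real.abs_le_sqrt (Finset.single_le_sum (f := fun i => (A.mulVec v i) ^ 2)
      (fun i _ => sq_nonneg _) (Finset.mem_univ 0))
  calc m * euclNorm v ≤ m * (√(1 + α) * |v 0|) := by gcongr
    _ = m * √(1 + α) * |v 0| := by ring
    _ < (abar - ϵ * √α) * |v 0| :=
        mul_lt_mul_of_pos_right ((lt_div_iff₀ (by positivity)).mp hcond) hxpos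
    _ ≤ |A.mulVec v 0| := hlow
    _ ≤ euclNorm (A.mulVec v) := hcoord
end

section
/- Let n ≥ 2, α > 0, m > 1, and Q(𝗑,𝗒) = α𝗑² − ‖𝗒‖² on ℝ × ℝ^{n−1}. Let U ⊂ ℝⁿ be convex and F : ℝⁿ → ℝⁿ be C¹. Suppose there are constants a̲ > 0 and ϵ ≥ 0 with (a̲ − ϵ√α)/√(1+α) > m such that for every z ∈ U the first row of DF(z) satisfies ∂F₁/∂𝗑(z) ≥ a̲ and ‖∇_𝗒 F₁(z)‖ ≤ ϵ. Then for all v₁, v₂ ∈ U with v₁ ≠ v₂ and Q(v₁ − v₂) ≥ 0 one has ‖F(v₁) − F(v₂)‖ > m‖v₁ − v₂‖. -/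
lemma abs_apply_le_euclNorm {k : ℕ} (v : Fin k → ℝ) (i : Fin k) : |v i| ≤ euclNorm v := by
  rw [euclNorm]
  apply Real.abs_le_sqrt
  exact Finset.single_le_sum (f := fun i => (v i) ^ 2) (fun j _ => sq_nonneg _) (Finset.mem_univ i)

/-- The first component of `L w` as the first row of the matrix of `L` applied to `w`, with the
`𝗑`-entry split off from the `𝗒`-entries. -/
lemma clm_apply_zero_eq (d : ℕ) (L : (Fin (d + 2) → ℝ) →L[ℝ] (Fin (d + 2) → ℝ))
    (w : Fin (d + 2) → ℝ) :
    L w 0 = w 0 * L (Pi.single 0 1) 0 +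
      ∑ j : Fin (d + 1), w j.succ * L (Pi.single j.succ 1) 0 := by
  conv_lhs => rw [pi_eq_sum_univ' w]
  rw [map_sum, Finset.sum_apply, Fin.sum_univ_succ]
  simp only [map_smul, Pi.smul_apply, smul_eq_mul]

/-- **Mean-value verification of the expansion condition (cc2).**
Let `n = d + 2 ≥ 2`, `α > 0`, `m > 1`, `U ⊆ ℝⁿ` convex and `F : ℝⁿ → ℝⁿ` be `C¹`.
If there are `a̲ > 0` and `ϵ ≥ 0` with `(a̲ - ϵ√α)/√(1+α) > m` such that for every
`z ∈ U` the first row of `DF(z)` satisfies `∂F₁/∂𝗑(z) ≥ a̲` and `‖∇_𝗒 F₁(z)‖ ≤ ϵ`,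
then `‖F(v₁) - F(v₂)‖ > m‖v₁ - v₂‖` for all `v₁ ≠ v₂` in `U` with `Q(v₁ - v₂) ≥ 0`. -/
theorem expansion_condition_from_derivative_bounds
    (d : ℕ) (α m abar ϵ : ℝ) (hα : 0 < α) (hm : 1 < m)
    (U : Set (Fin (d + 2) → ℝ)) (hU : Convex ℝ U)
    (F : (Fin (d + 2) → ℝ) → (Fin (d + 2) → ℝ)) (hF : ContDiff ℝ 1 F)
    (habar : 0 < abar) (hϵ : 0 ≤ ϵ)
    (hcond : m < (abar - ϵ * Real.sqrt α) / Real.sqrt (1 + α))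
    (hrow1 : ∀ z ∈ U, abar ≤ fderiv ℝ F z (Pi.single 0 1) 0)
    (hrow2 : ∀ z ∈ U,
      Real.sqrt (∑ j : Fin (d + 1), (fderiv ℝ F z (Pi.single j.succ 1) 0) ^ 2) ≤ ϵ)
    (v₁ v₂ : Fin (d + 2) → ℝ) (hv₁ : v₁ ∈ U) (hv₂ : v₂ ∈ U) (hne : v₁ ≠ v₂)
    (hQ : 0 ≤ Qform d α (v₁ - v₂)) :
    m * euclNorm (v₁ - v₂) < euclNorm (F v₁ - F v₂) := by
  obtain ⟨z, hz, hmv⟩ := domain_mvt (f := fun v => F v 0)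
    (f' := fun z => (ContinuousLinearMap.proj (R := ℝ) (φ := fun _ : Fin (d + 2) => ℝ) 0).comp
      (fderiv ℝ F z))
    (fun x _ => (((ContinuousLinearMap.proj (R := ℝ) (φ := fun _ : Fin (d + 2) => ℝ)
      0).hasFDerivAt.comp x
        ((hF.differentiable one_ne_zero) x).hasFDerivAt).hasFDerivWithinAt))
    hU hv₂ hv₁
  have hzU : z ∈ U := hU.segment_subset hv₂ hv₁ hz
  have h1 := hrow1 z hzU
  have h2 := hrow2 z hzU
  have hw : v₁ - v₂ ≠ 0 := sub_ne_zero.mpr hne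
  have hmv' : (F v₁ - F v₂) 0 = fderiv ℝ F z (v₁ - v₂) 0 := hmv
  rw [clm_apply_zero_eq] at hmv'
  refine lt_of_lt_of_le ?_ (abs_apply_le_euclNorm _ 0)
  rw [hmv']
  generalize v₁ - v₂ = w at *
  set A := fderiv ℝ F z (Pi.single 0 1) 0
  set g : Fin (d + 1) → ℝ := fun j => fderiv ℝ F z (Pi.single j.succ 1) 0 with hg
  have hS : ∑ j : Fin (d + 1), (w j.succ) ^ 2 ≤ α * (w 0) ^ 2 := by
    unfold Qform at hQ; linarith
  have hw0 : 0 < |w 0| := by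
    rw [abs_pos]
    intro h0
    apply hw
    have hz0 : ∑ j : Fin (d + 1), (w j.succ) ^ 2 = 0 :=
      le_antisymm (by simpa [h0] using hS) (Finset.sum_nonneg fun _ _ => sq_nonneg _)
    rw [Finset.sum_eq_zero_iff_of_nonneg (fun _ _ => sq_nonneg _)] at hz0
    ext i
    refine Fin.cases h0 (fun j => ?_) i
    simpa using hz0 j (Finset.mem_univ j)
  have hy : Real.sqrt (∑ j : Fin (d + 1), (w j.succ) ^ 2) ≤ Real.sqrt α * |w 0| := by
    rw [← Real.sqrt_sq_eq_abs, ← Real.sqrt_mul hα.le]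
    exact Real.sqrt_le_sqrt hS
  have hnorm : euclNorm w ≤ Real.sqrt (1 + α) * |w 0| := by
    rw [← Real.sqrt_sq_eq_abs, ← Real.sqrt_mul (by positivity), euclNorm, Fin.sum_univ_succ]
    exact Real.sqrt_le_sqrt (by linarith)
  have hCS : |∑ j : Fin (d + 1), w j.succ * g j| ≤ ϵ * (Real.sqrt α * |w 0|) := by
    calc |∑ j : Fin (d + 1), w j.succ * g j|
        ≤ Real.sqrt (∑ j : Fin (d + 1), (w j.succ) ^ 2) * Real.sqrt (∑ j, (g j) ^ 2) := by
          rw [← Real.sqrt_mul (Finset.sum_nonneg fun _ _ => sq_nonneg _)]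
          exact Real.abs_le_sqrt (Finset.sum_mul_sq_le_sq_mul_sq _ _ _)
      _ ≤ (Real.sqrt α * |w 0|) * ϵ := by gcongr
      _ = _ := mul_comm _ _
  rw [lt_div_iff₀ (by positivity)] at hcond
  have hlow : |w 0 * A| - |∑ j : Fin (d + 1), w j.succ * g j| ≤
      |w 0 * A + ∑ j : Fin (d + 1), w j.succ * g j| := by
    have h := abs_sub_abs_le_abs_sub (w 0 * A) (-∑ j : Fin (d + 1), w j.succ * g j)
    rwa [abs_neg, sub_neg_eq_add] at h
  have hA : abar * |w 0| ≤ |w 0 * A| := by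
    rw [abs_mul, mul_comm]
    gcongr
    exact h1.trans (le_abs_self A)
  calc m * euclNorm w ≤ m * (Real.sqrt (1 + α) * |w 0|) := by gcongr
    _ = m * Real.sqrt (1 + α) * |w 0| := by ring
    _ < (abar - ϵ * Real.sqrt α) * |w 0| := by gcongr
    _ ≤ |w 0 * A + ∑ j : Fin (d + 1), w j.succ * g j| := by linarith
end

section
/- Let Φ : D ⊂ ℝ × ℝ⁴ → ℝ⁴, (τ, p) ↦ Φ_τ(p), be C¹ (a local flow), let C be an invertible 4×4 real matrix, q₀ ∈ ℝ⁴, ψ : ℝ⁴ → ℝ⁴ a C¹ map, λ > 0, and λ̂ : ℝ⁴ → ℝ⁴ the map λ̂(𝗑, 𝗒) = (λ𝗑, 𝗒) for (𝗑,𝗒) ∈ ℝ × ℝ³. Define G(τ, v₁, v₂) = Φ_τ(Cψ(v₁) + q₀) − (Cψ(λ̂(v₂)) + q₀). Let T ⊂ ℝ, U₁ ⊂ ℝ⁴, let U₂ = ∏_{i=1}^{4}[aᵢ, bᵢ] be a compact box with aᵢ < bᵢ, let v₀ ∈ U₂, and let 𝒜 be the set of 4×4 matrices A whose (i,j) entries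 lie between the infimum and supremum over v ∈ U₂ of the (i,j) entry of −C·Dψ(λ̂(v))·Dλ̂. Assume every A ∈ 𝒜 is invertible and that for every τ ∈ T, v₁ ∈ U₁ and A ∈ 𝒜 the point v₀ − A⁻¹ G(τ, v₁, v₀) lies in U₂. Then for every τ ∈ T and v₁ ∈ U₁ there exists a unique v₂ ∈ U₂ with G(τ, v₁, v₂) = 0, i.e. Φ_τ(Cψ(v₁) + q₀) = Cψ(λ̂(v₂)) + q₀; in particular Φ_τ(Cψ(U₁) + q₀) ⊂ Cψ(λ̂(U₂)) + q₀ for every τ ∈ T. -/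
/-!
The statement is the interval Newton theorem for `f = G(τ, v₁, ·)` on the box `U₂`, and it is
proved without Brouwer's theorem.

By the mean value theorem, applied to each component of `f` separately, any two points `v, w` of
the box satisfy `f v - f w = A (v - w)` for some `A ∈ 𝒜` (`exists_slope`). Since every `A ∈ 𝒜` is
invertible, `f` is injective on `U₂`, which gives uniqueness.

For existence, let `P` be the coordinatewise projection onto the box, fix `A₀ ∈ 𝒜`, and extend `f`
to `g v = f (P v) + A₀ (v - P v)` on the whole space. In each coordinate `j`,
`(P v - P w) j = θ j * (v - w) j` with `θ j ∈ [0, 1]`, so `g v - g w = A (v - w)` where column `j`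
of `A` is a convex combination of the `j`-th columns of two elements of `𝒜`; as `𝒜` is an interval
matrix, `A ∈ 𝒜`. Such a `g` has a zero (`exists_zero_of_slopes`): by coercivity
`|g|²` has a minimiser `v`. If `r = g v ≠ 0`, then `{rᵀA | A ∈ 𝒜}` is convex, compact and avoids
`0`, so it is strictly separated from `0` by some `h`, i.e. `⟨r, A h⟩ < 0` uniformly in `A ∈ 𝒜`, and
moving from `v` a little in the direction `h` decreases `|g|²`. Finally, the zero `v` of `g` is
`v₀ - A⁻¹ g v₀ = v₀ - A⁻¹ f v₀` for some `A ∈ 𝒜`, hence it lies in `U₂`, where `g = f`.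
-/

/-- The rescaling `λ̂(𝗑, 𝗒) = (λ𝗑, 𝗒)` of the first coordinate of `ℝ⁴ = ℝ × ℝ³`. -/
def lamHat (lam : ℝ) (v : Fin 4 → ℝ) : Fin 4 → ℝ :=
  Function.update v 0 (lam * v 0)

/-- The constant Jacobian `Dλ̂ = diag(λ, 1, 1, 1)` of `λ̂`. -/
noncomputable def lamHatJac (lam : ℝ) : Matrix (Fin 4) (Fin 4) ℝ :=
  Matrix.diagonal fun i => if i = 0 then lam else 1

/-- The map `G(τ, v₁, v₂) = Φ_τ(Cψ(v₁) + q₀) - (Cψ(λ̂(v₂)) + q₀)`. -/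
noncomputable def Gmap (Φ : ℝ → (Fin 4 → ℝ) → (Fin 4 → ℝ))
    (C : Matrix (Fin 4) (Fin 4) ℝ) (q₀ : Fin 4 → ℝ)
    (ψ : (Fin 4 → ℝ) → (Fin 4 → ℝ)) (lam : ℝ)
    (τ : ℝ) (v₁ v₂ : Fin 4 → ℝ) : Fin 4 → ℝ :=
  Φ τ (C.mulVec (ψ v₁) + q₀) - (C.mulVec (ψ (lamHat lam v₂)) + q₀)

/-- The matrix `-C · Dψ(λ̂(v)) · Dλ̂` entering the interval Newton operator. -/
noncomputable def newtonMatrix (C : Matrix (Fin 4) (Fin 4) ℝ)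
    (ψ : (Fin 4 → ℝ) → (Fin 4 → ℝ)) (lam : ℝ)
    (v : Fin 4 → ℝ) : Matrix (Fin 4) (Fin 4) ℝ :=
  -(C * (Matrix.of fun i j => fderiv ℝ ψ (lamHat lam v) (Pi.single j 1) i)
    * lamHatJac lam)

open Matrix in
/-- A continuous map all of whose difference quotients are realised by matrices from a convex
compact set of invertible matrices has a zero. -/
theorem exists_zero_of_slopes {n : ℕ} (S : Set (Matrix (Fin n) (Fin n) ℝ))
    (hconv : Convex ℝ S) (hcomp : IsCompact S) (hinv : ∀ A ∈ S, IsUnit A)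
    (g : (Fin n → ℝ) → (Fin n → ℝ)) (hg : Continuous g)
    (hslope : ∀ v w, ∃ A ∈ S, g v - g w = A *ᵥ (v - w)) : ∃ v, g v = 0 := by
  have hdet : ∀ A ∈ S, A.det ≠ 0 := fun A hA =>
    ((Matrix.isUnit_iff_isUnit_det A).1 (hinv A hA)).ne_zero
  set φ : (Fin n → ℝ) → ℝ := fun v => g v ⬝ᵥ g v with hφ
  have hφc : Continuous φ := by
    simp only [hφ, dotProduct]; fun_prop
  set R : ℝ := Real.sqrt (φ 0) + ‖g 0‖ with hR
  set K : Set (Fin n → ℝ) :=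
    (fun p : Matrix (Fin n) (Fin n) ℝ × (Fin n → ℝ) => p.1⁻¹ *ᵥ p.2) ''
      (S ×ˢ Metric.closedBall 0 R) with hK
  have hKc : IsCompact K := by
    refine (hcomp.prod (isCompact_closedBall _ _)).image_of_continuousOn ?_
    have h1 : ContinuousOn (fun p : Matrix (Fin n) (Fin n) ℝ × (Fin n → ℝ) => p.1⁻¹)
        (S ×ˢ Metric.closedBall 0 R) := by
      have hd : Continuous fun p : Matrix (Fin n) (Fin n) ℝ × (Fin n → ℝ) => p.1.det :=
        continuous_fst.matrix_det
      have ha : Continuous fun p : Matrix (Fin n) (Fin n) ℝ × (Fin n → ℝ) => p.1.adjugate :=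
        continuous_fst.matrix_adjugate
      simp only [Matrix.inv_def, Ring.inverse_eq_inv']
      exact (hd.continuousOn.inv₀ fun p hp => hdet _ hp.1).smul ha.continuousOn
    have h2 : Continuous fun p : Matrix (Fin n) (Fin n) ℝ × (Fin n → ℝ) => p.1 *ᵥ p.2 :=
      continuous_fst.matrix_mulVec continuous_snd
    exact h2.comp_continuousOn (h1.prodMk continuousOn_snd)
  have hsub : ∀ v, φ v ≤ φ 0 → v ∈ K := by
    intro v hv
    obtain ⟨A, hA, h⟩ := hslope v 0
    refine ⟨(A, g v - g 0), ⟨hA, ?_⟩, ?_⟩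
    · have : ‖g v‖ ≤ Real.sqrt (φ 0) := by
        refine (pi_norm_le_iff_of_nonneg (Real.sqrt_nonneg _)).2 fun i => ?_
        refine Real.abs_le_sqrt (le_trans ?_ hv)
        have := Finset.single_le_sum (f := fun i => g v i * g v i)
          (fun i _ => mul_self_nonneg _) (Finset.mem_univ i)
        simpa [hφ, dotProduct, sq] using this
      simpa [hR] using (norm_sub_le (g v) (g 0)).trans (by linarith)
    · simp only
      rw [h, Matrix.mulVec_mulVec, Matrix.nonsing_inv_mul _ (hdet A hA).isUnit]
      simp
  obtain ⟨v, -, hmin⟩ := hKc.exists_isMinOn ⟨0, hsub 0 le_rfl⟩ hφc.continuousOn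
  have hmin' : ∀ w, φ v ≤ φ w := by
    intro w
    by_cases hw : φ w ≤ φ 0
    · exact hmin (hsub w hw)
    · exact (hmin (hsub 0 le_rfl)).trans (not_le.1 hw).le
  refine ⟨v, ?_⟩
  by_contra hr
  have hlin : IsLinearMap ℝ fun A : Matrix (Fin n) (Fin n) ℝ => g v ᵥ* A :=
    ⟨fun A B => Matrix.vecMul_add _ _ _, fun c A => Matrix.vecMul_smul _ _ _⟩
  have hvc : Continuous fun A : Matrix (Fin n) (Fin n) ℝ => g v ᵥ* A :=
    continuous_const.matrix_vecMul continuous_id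
  have hnot : (0 : Fin n → ℝ) ∉ (fun A : Matrix (Fin n) (Fin n) ℝ => g v ᵥ* A) '' S := by
    rintro ⟨A, hA, h⟩
    apply hr
    exact Matrix.eq_zero_of_vecMul_eq_zero (hdet A hA) h
  obtain ⟨F, u, hF0, hF⟩ := geometric_hahn_banach_point_closed
    (hconv.is_linear_image hlin) (hcomp.image hvc).isClosed hnot
  rw [map_zero] at hF0
  set h : Fin n → ℝ := fun i => -F (Pi.single i 1) with hh
  have hFh : ∀ x, x ⬝ᵥ h = -F x := by
    intro x
    conv_rhs => rw [← Finset.univ_sum_single x]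
    simp only [map_sum, dotProduct, hh, ← Finset.sum_neg_distrib]
    refine Finset.sum_congr rfl fun i _ => ?_
    have : Pi.single i (x i) = x i • (Pi.single i (1 : ℝ) : Fin n → ℝ) := by
      rw [← Pi.single_smul]; simp
    rw [this, map_smul, smul_eq_mul]; ring
  have hdec : ∀ A ∈ S, g v ⬝ᵥ (A *ᵥ h) < -u := by
    intro A hA
    rw [Matrix.dotProduct_mulVec, hFh]
    linarith [hF _ ⟨A, hA, rfl⟩]
  have hbdd : Continuous fun A : Matrix (Fin n) (Fin n) ℝ => (A *ᵥ h) ⬝ᵥ (A *ᵥ h) := by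
    have : Continuous fun A : Matrix (Fin n) (Fin n) ℝ => A *ᵥ h :=
      continuous_id.matrix_mulVec continuous_const
    exact this.dotProduct this
  obtain ⟨M, hM⟩ := (hcomp.image hbdd).bddAbove
  -- With `⟨r, A h⟩ < -u` and `|A h|² ≤ M`, the step `s` only has to satisfy `s * M ≤ 2 * u`.
  set s : ℝ := u / (|M| + 1) with hs
  have hs0 : 0 < s := by positivity
  obtain ⟨A, hA, hstep⟩ := hslope (v + s • h) v
  have e1 : g (v + s • h) = g v + s • (A *ᵥ h) := by
    rw [add_sub_cancel_left, Matrix.mulVec_smul] at hstep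
    rw [← hstep]; abel
  have e2 : φ (v + s • h) =
      φ v + 2 * s * (g v ⬝ᵥ (A *ᵥ h)) + s ^ 2 * ((A *ᵥ h) ⬝ᵥ (A *ᵥ h)) := by
    simp only [hφ, e1, add_dotProduct, dotProduct_add, smul_dotProduct, dotProduct_smul,
      smul_eq_mul]
    rw [dotProduct_comm (A *ᵥ h) (g v)]; ring
  have h3 := hmin' (v + s • h)
  have h4 : (A *ᵥ h) ⬝ᵥ (A *ᵥ h) ≤ M := hM ⟨A, hA, rfl⟩
  have h5 : s * (|M| + 1) = u := by rw [hs]; field_simp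
  have h6 : s * ((A *ᵥ h) ⬝ᵥ (A *ᵥ h)) ≤ u := by
    rw [← h5]
    exact mul_le_mul_of_nonneg_left (by linarith [le_abs_self M]) hs0.le
  nlinarith [hdec A hA]

open Matrix in
/-- Existence part of the interval Newton theorem: the slopes of `f` on a box belong to an
interval matrix `S` with invertible elements, and the Newton operator maps into the box. -/
theorem interval_newton_exists {n : ℕ} (L H : Matrix (Fin n) (Fin n) ℝ)
    (S : Set (Matrix (Fin n) (Fin n) ℝ)) (hS : S = {A | ∀ i j, A i j ∈ Set.Icc (L i j) (H i j)})
    (hinv : ∀ A ∈ S, IsUnit A) (a b : Fin n → ℝ) (hab : ∀ i, a i ≤ b i)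
    (f : (Fin n → ℝ) → (Fin n → ℝ)) (hf : Continuous f)
    (hslope : ∀ v ∈ Set.univ.pi fun i => Set.Icc (a i) (b i),
      ∀ w ∈ Set.univ.pi fun i => Set.Icc (a i) (b i), ∃ A ∈ S, f v - f w = A *ᵥ (v - w))
    (v₀ : Fin n → ℝ) (hv₀ : v₀ ∈ Set.univ.pi fun i => Set.Icc (a i) (b i))
    (hN : ∀ A ∈ S, v₀ - A⁻¹ *ᵥ f v₀ ∈ Set.univ.pi fun i => Set.Icc (a i) (b i)) :
    ∃ v ∈ Set.univ.pi fun i => Set.Icc (a i) (b i), f v = 0 := by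
  set U := Set.univ.pi fun i => Set.Icc (a i) (b i) with hU
  have hdet : ∀ A ∈ S, IsUnit A.det := fun A hA =>
    (Matrix.isUnit_iff_isUnit_det A).1 (hinv A hA)
  have hconv : Convex ℝ S := by
    subst hS
    intro A hA B hB s t hs ht hst i j
    exact convex_Icc _ _ (hA i j) (hB i j) hs ht hst
  have hcomp : IsCompact S := by
    have : S = Set.univ.pi fun i => Set.univ.pi fun j => Set.Icc (L i j) (H i j) := by
      rw [hS]
      exact Set.ext fun A => ⟨fun h i _ j _ => h i j, fun h i j => h i trivial j trivial⟩
    rw [this]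
    exact isCompact_univ_pi fun i => isCompact_univ_pi fun j => isCompact_Icc
  obtain ⟨A₀, hA₀, -⟩ := hslope v₀ hv₀ v₀ hv₀
  set P : (Fin n → ℝ) → (Fin n → ℝ) := fun v i => max (a i) (min (b i) (v i)) with hP
  have hPc : Continuous P := by rw [hP]; fun_prop
  have hPU : ∀ v, P v ∈ U := fun v i _ => ⟨le_max_left _ _, max_le (hab i) (min_le_left _ _)⟩
  have hPid : ∀ v ∈ U, P v = v := by
    intro v hv
    ext i
    have := hv i trivial
    simp only [hP]
    rw [min_eq_right this.2, max_eq_right this.1]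
  have hθ : ∀ v w : Fin n → ℝ, ∀ j, ∃ θ : ℝ, 0 ≤ θ ∧ θ ≤ 1 ∧ P v j - P w j = θ * (v j - w j) := by
    -- Up to swapping, `v j < w j`, and the clamp is monotone and `1`-Lipschitz.
    have key : ∀ p q x y : ℝ, p ≤ q → x < y →
        0 ≤ max p (min q y) - max p (min q x) ∧ max p (min q y) - max p (min q x) ≤ y - x := by
      intro p q x y hpq hxy
      constructor
      · have : max p (min q x) ≤ max p (min q y) :=
          max_le_max le_rfl (min_le_min le_rfl hxy.le)
        linarith
      · grind
    intro v w j
    rcases lt_trichotomy (v j) (w j) with h | h | h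
    · obtain ⟨h1, h2⟩ := key (a j) (b j) _ _ (hab j) h
      have hpos : 0 < w j - v j := by linarith
      refine ⟨(P w j - P v j) / (w j - v j), div_nonneg h1 hpos.le, (div_le_one hpos).2 h2, ?_⟩
      field_simp
      ring
    · exact ⟨0, le_rfl, zero_le_one, by simp [hP, h]⟩
    · obtain ⟨h1, h2⟩ := key (a j) (b j) _ _ (hab j) h
      have hpos : 0 < v j - w j := by linarith
      refine ⟨(P v j - P w j) / (v j - w j), div_nonneg h1 hpos.le, (div_le_one hpos).2 h2, ?_⟩
      field_simp
  set g : (Fin n → ℝ) → (Fin n → ℝ) := fun v => f (P v) + A₀ *ᵥ (v - P v) with hg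
  have hgc : Continuous g :=
    (hf.comp hPc).add (continuous_const.matrix_mulVec (continuous_id.sub hPc))
  have hgU : ∀ v ∈ U, g v = f v := fun v hv => by simp [hg, hPid v hv]
  have hgs : ∀ v w, ∃ A ∈ S, g v - g w = A *ᵥ (v - w) := by
    intro v w
    obtain ⟨B, hB, hBf⟩ := hslope (P v) (hPU v) (P w) (hPU w)
    choose θ hθ0 hθ1 hθe using hθ v w
    refine ⟨Matrix.of fun i j => θ j * B i j + (1 - θ j) * A₀ i j, ?_, ?_⟩
    · rw [hS] at hB hA₀ ⊢
      intro i j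
      exact convex_Icc _ _ (hB i j) (hA₀ i j) (hθ0 j) (sub_nonneg.2 (hθ1 j)) (by ring)
    · have : g v - g w = B *ᵥ (P v - P w) + A₀ *ᵥ ((v - w) - (P v - P w)) := by
        rw [← hBf, show (v - w) - (P v - P w) = (v - P v) - (w - P w) by abel, Matrix.mulVec_sub]
        simp only [hg]; abel
      rw [this]
      ext i
      simp only [Matrix.mulVec, dotProduct, Pi.add_apply, Pi.sub_apply, Matrix.of_apply,
        ← Finset.sum_add_distrib]
      refine Finset.sum_congr rfl fun j _ => ?_
      rw [hθe j]; ring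
  obtain ⟨v, hv⟩ := exists_zero_of_slopes S hconv hcomp hinv g hgc hgs
  obtain ⟨A, hA, hAe⟩ := hgs v₀ v
  have hvU : v ∈ U := by
    have := hN A hA
    rwa [← hgU v₀ hv₀, show g v₀ = A *ᵥ (v₀ - v) by rw [← hAe, hv, sub_zero],
      Matrix.mulVec_mulVec, Matrix.nonsing_inv_mul _ (hdet A hA), Matrix.one_mulVec,
      sub_sub_cancel] at this
  exact ⟨v, hvU, by rw [← hgU v hvU, hv]⟩

theorem lamHat_eq_mulVec (lam : ℝ) (v : Fin 4 → ℝ) :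
    lamHat lam v = (lamHatJac lam).mulVec v := by
  ext i
  rw [lamHatJac, Matrix.mulVec_diagonal]
  by_cases h : i = 0
  · subst h; simp [lamHat]
  · simp [lamHat, h]

theorem continuous_lamHat (lam : ℝ) : Continuous (lamHat lam) := by
  unfold lamHat; fun_prop

theorem hasFDerivAt_Gmap (Φ : ℝ → (Fin 4 → ℝ) → (Fin 4 → ℝ))
    (C : Matrix (Fin 4) (Fin 4) ℝ) (q₀ : Fin 4 → ℝ)
    (ψ : (Fin 4 → ℝ) → (Fin 4 → ℝ)) (hψ : ContDiff ℝ 1 ψ) (lam τ : ℝ) (v₁ v : Fin 4 → ℝ) :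
    HasFDerivAt (Gmap Φ C q₀ ψ lam τ v₁)
      (LinearMap.toContinuousLinearMap (newtonMatrix C ψ lam v).mulVecLin) v := by
  have h1 : HasFDerivAt (lamHat lam)
      (LinearMap.toContinuousLinearMap (lamHatJac lam).mulVecLin) v := by
    rw [show lamHat lam = LinearMap.toContinuousLinearMap (lamHatJac lam).mulVecLin from
      funext fun v => lamHat_eq_mulVec lam v]
    exact ContinuousLinearMap.hasFDerivAt _
  have h2 : HasFDerivAt ψ (fderiv ℝ ψ (lamHat lam v)) (lamHat lam v) :=
    (hψ.differentiable one_ne_zero _).hasFDerivAt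
  have h3 := ((LinearMap.toContinuousLinearMap C.mulVecLin).hasFDerivAt.comp v
    (h2.comp v h1))
  have h4 := (h3.add_const q₀).const_sub (Φ τ (C.mulVec (ψ v₁) + q₀))
  refine h4.congr_fderiv ?_
  ext1 x
  have hJ : ∀ y, fderiv ℝ ψ (lamHat lam v) y = (Matrix.of fun i j =>
      fderiv ℝ ψ (lamHat lam v) (Pi.single j 1) i).mulVec y := by
    intro y
    exact (LinearMap.toMatrix'_mulVec (fderiv ℝ ψ (lamHat lam v)).toLinearMap y).symm
  change -(C.mulVec (fderiv ℝ ψ (lamHat lam v) ((lamHatJac lam).mulVec x))) =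
    (newtonMatrix C ψ lam v).mulVec x
  rw [hJ, newtonMatrix, Matrix.neg_mulVec, Matrix.mulVec_mulVec, Matrix.mulVec_mulVec]

theorem continuous_newtonMatrix (C : Matrix (Fin 4) (Fin 4) ℝ)
    (ψ : (Fin 4 → ℝ) → (Fin 4 → ℝ)) (hψ : ContDiff ℝ 1 ψ) (lam : ℝ) (i j : Fin 4) :
    Continuous fun v => newtonMatrix C ψ lam v i j := by
  have h : Continuous fun v => (Matrix.of fun i j =>
      fderiv ℝ ψ (lamHat lam v) (Pi.single j 1) i : Matrix (Fin 4) (Fin 4) ℝ) := by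
    refine continuous_matrix fun i j => ?_
    have h1 : Continuous fun v => fderiv ℝ ψ (lamHat lam v) :=
      (hψ.continuous_fderiv one_ne_zero).comp (continuous_lamHat lam)
    exact (continuous_apply i).comp (h1.clm_apply continuous_const)
  exact (((continuous_const.matrix_mul h).matrix_mul continuous_const).neg).matrix_elem i j

/-- Differences of `G(τ, v₁, ·)` on a box are given by matrices from the interval enclosure of its
Jacobian. The rows of the matrix come from different intermediate points, one for each component,
so the matrix need not be a value of the Jacobian. -/
theorem exists_slope (Φ : ℝ → (Fin 4 → ℝ) → (Fin 4 → ℝ))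
    (C : Matrix (Fin 4) (Fin 4) ℝ) (q₀ : Fin 4 → ℝ)
    (ψ : (Fin 4 → ℝ) → (Fin 4 → ℝ)) (hψ : ContDiff ℝ 1 ψ) (lam τ : ℝ) (v₁ : Fin 4 → ℝ)
    (U : Set (Fin 4 → ℝ)) (hUc : IsCompact U) (hU : Convex ℝ U)
    (v : Fin 4 → ℝ) (hv : v ∈ U) (w : Fin 4 → ℝ) (hw : w ∈ U) :
    ∃ A ∈ {A : Matrix (Fin 4) (Fin 4) ℝ | ∀ i j, A i j ∈ Set.Icc
        (sInf ((fun v => newtonMatrix C ψ lam v i j) '' U))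
        (sSup ((fun v => newtonMatrix C ψ lam v i j) '' U))},
      Gmap Φ C q₀ ψ lam τ v₁ v - Gmap Φ C q₀ ψ lam τ v₁ w = A.mulVec (v - w) := by
  have hmv : ∀ i, ∃ ξ ∈ U, Gmap Φ C q₀ ψ lam τ v₁ v i - Gmap Φ C q₀ ψ lam τ v₁ w i =
      (newtonMatrix C ψ lam ξ).mulVec (v - w) i := by
    intro i
    obtain ⟨ξ, hξ, h⟩ := domain_mvt
      (fun x (_ : x ∈ U) => ((hasFDerivAt_pi'.1
        (hasFDerivAt_Gmap Φ C q₀ ψ hψ lam τ v₁ x)) i).hasFDerivWithinAt) hU hw hv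
    exact ⟨ξ, hU.segment_subset hw hv hξ, h⟩
  choose ξ hξ h using hmv
  refine ⟨Matrix.of fun i j => newtonMatrix C ψ lam (ξ i) i j, fun i j => ?_, ?_⟩
  · have hc := hUc.image (continuous_newtonMatrix C ψ hψ lam i j)
    exact ⟨csInf_le hc.bddBelow ⟨ξ i, hξ i, rfl⟩, le_csSup hc.bddAbove ⟨ξ i, hξ i, rfl⟩⟩
  · ext i
    exact h i

/-- **Rigorous bounds for images of the local map (Lemma on `F(U₁) ⊆ λ̂(U₂)`).**
Let `Φ` be a `C¹` local flow on `D ⊆ ℝ × ℝ⁴`, `C` an invertible matrix, `ψ` a `C¹` map,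
`λ > 0`, and `G(τ,v₁,v₂) = Φ_τ(Cψ(v₁)+q₀) - (Cψ(λ̂(v₂))+q₀)`.  Let `U₂ = ∏ᵢ[aᵢ,bᵢ]`
be a compact box, `v₀ ∈ U₂`, and `𝒜` the interval enclosure of
`-C·Dψ(λ̂(v))·Dλ̂` over `v ∈ U₂`.  If every `A ∈ 𝒜` is invertible and the Newton image
`v₀ - A⁻¹ G(τ,v₁,v₀)` lies in `U₂` for all `τ ∈ T`, `v₁ ∈ U₁`, `A ∈ 𝒜`, then for every
`τ ∈ T`, `v₁ ∈ U₁` there is a unique `v₂ ∈ U₂` with `G(τ,v₁,v₂) = 0`; in particular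
`Φ_τ(Cψ(U₁)+q₀) ⊆ Cψ(λ̂(U₂))+q₀`. -/
theorem local_map_image_bound
    (Φ : ℝ → (Fin 4 → ℝ) → (Fin 4 → ℝ)) (D : Set (ℝ × (Fin 4 → ℝ)))
    (hΦ : ContDiffOn ℝ 1 (fun p : ℝ × (Fin 4 → ℝ) => Φ p.1 p.2) D)
    (C : Matrix (Fin 4) (Fin 4) ℝ) (hC : IsUnit C)
    (q₀ : Fin 4 → ℝ) (ψ : (Fin 4 → ℝ) → (Fin 4 → ℝ)) (hψ : ContDiff ℝ 1 ψ)
    (lam : ℝ) (hlam : 0 < lam)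
    (T : Set ℝ) (U₁ : Set (Fin 4 → ℝ))
    (hdom : ∀ τ ∈ T, ∀ v₁ ∈ U₁, (τ, C.mulVec (ψ v₁) + q₀) ∈ D)
    (a b : Fin 4 → ℝ) (hab : ∀ i, a i < b i)
    (U₂ : Set (Fin 4 → ℝ)) (hU₂ : U₂ = Set.univ.pi fun i => Set.Icc (a i) (b i))
    (v₀ : Fin 4 → ℝ) (hv₀ : v₀ ∈ U₂)
    (𝒜 : Set (Matrix (Fin 4) (Fin 4) ℝ))
    (h𝒜 : 𝒜 = {A | ∀ i j, A i j ∈ Set.Icc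
        (sInf ((fun v => newtonMatrix C ψ lam v i j) '' U₂))
        (sSup ((fun v => newtonMatrix C ψ lam v i j) '' U₂))})
    (hAinv : ∀ A ∈ 𝒜, IsUnit A)
    (hN : ∀ τ ∈ T, ∀ v₁ ∈ U₁, ∀ A ∈ 𝒜,
      v₀ - A⁻¹.mulVec (Gmap Φ C q₀ ψ lam τ v₁ v₀) ∈ U₂) :
    ∀ τ ∈ T, ∀ v₁ ∈ U₁,
      (∃! v₂, v₂ ∈ U₂ ∧ Gmap Φ C q₀ ψ lam τ v₁ v₂ = 0) ∧
      Φ τ (C.mulVec (ψ v₁) + q₀) ∈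
        (fun v => C.mulVec (ψ (lamHat lam v)) + q₀) '' U₂ := by
  intro τ hτ v₁ hv₁
  subst hU₂
  have hsl := exists_slope Φ C q₀ ψ hψ lam τ v₁ _
    (isCompact_univ_pi fun i => isCompact_Icc (a := a i) (b := b i))
    (convex_pi fun i _ => convex_Icc (a i) (b i))
  rw [← h𝒜] at hsl
  have hcont : Continuous (Gmap Φ C q₀ ψ lam τ v₁) :=
    continuous_iff_continuousAt.2 fun v => (hasFDerivAt_Gmap Φ C q₀ ψ hψ lam τ v₁ v).continuousAt
  obtain ⟨v, hv, hv0⟩ := interval_newton_exists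
    (fun i j => sInf ((fun v => newtonMatrix C ψ lam v i j) ''
      Set.univ.pi fun i => Set.Icc (a i) (b i)))
    (fun i j => sSup ((fun v => newtonMatrix C ψ lam v i j) ''
      Set.univ.pi fun i => Set.Icc (a i) (b i)))
    𝒜 h𝒜 hAinv a b (fun i => (hab i).le) (Gmap Φ C q₀ ψ lam τ v₁) hcont hsl v₀ hv₀
    (hN τ hτ v₁ hv₁)
  refine ⟨⟨v, ⟨hv, hv0⟩, ?_⟩, v, hv, (sub_eq_zero.1 hv0).symm⟩
  rintro w ⟨hw, hw0⟩
  obtain ⟨A, hA, hAe⟩ := hsl w hw v hv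
  rw [hw0, hv0, sub_zero] at hAe
  exact sub_eq_zero.1 (Matrix.eq_zero_of_mulVec_eq_zero
    ((Matrix.isUnit_iff_isUnit_det A).1 (hAinv A hA)).ne_zero hAe.symm)
end
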